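/- Let M ⊆ ℝ[x,y] be a hermitian module. If M has the Quillen property (Q), then M has the strong moment property (SMP): every ℝ-linear functional L : ℝ[x,y] → ℝ with L ≥ 0 on M is integration with respect to some positive Borel measure on X_M. Conversely, if M is archimedean and has (SMP), then M has (Q). -/

import Mathlib

open MvPolynomial Complex Matrix MeasureTheory ComplexOrder

noncomputable section

universe u

/-- `ℂ[z,z̄]`: the polynomial ring in the `2n` variables `z_j` (encoded `Sum.inl j`)
and `z̄_j` (encoded `Sum.inr j`). -/
abbrev CPoly (n : ℕ) := MvPolynomial (Fin n ⊕ Fin n) ℂ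

/-- The involution `f ↦ f*`: conjugate the coefficients and swap `z_j ↔ z̄_j`. -/
def hermStar (n : ℕ) : CPoly n →+* CPoly n :=
  (MvPolynomial.rename (Sum.swap : Fin n ⊕ Fin n → Fin n ⊕ Fin n)).toRingHom.comp
    (MvPolynomial.map (starRingEnd ℂ))

/-- The inclusion of the holomorphic polynomials `ℂ[z]` into `ℂ[z,z̄]`. -/
def hol (n : ℕ) : MvPolynomial (Fin n) ℂ →ₐ[ℂ] CPoly n :=
  MvPolynomial.rename Sum.inl

/-- Evaluation `f(a,b)` (substituting `a` for `z` and `b` for `z̄`). -/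
def evalPair {n : ℕ} (a b : Fin n → ℂ) (f : CPoly n) : ℂ :=
  MvPolynomial.eval (Sum.elim a b) f

/-- Evaluation `f(a) := f(a, ā)`. -/
def evalAt {n : ℕ} (a : Fin n → ℂ) (f : CPoly n) : ℂ :=
  evalPair a (fun j => (starRingEnd ℂ) (a j)) f

/-- `‖z‖² = |z_1|² + ⋯ + |z_n|²`. -/
def normZ (n : ℕ) : CPoly n := ∑ j : Fin n, X (Sum.inl j) * X (Sum.inr j)

/-- `Σ_h`: hermitian sums of squares `∑ |p_i|²`, `p_i ∈ ℂ[z]` holomorphic. -/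
def SigmaH (n : ℕ) : Set (CPoly n) :=
  {f | ∃ (k : ℕ) (p : Fin k → MvPolynomial (Fin n) ℂ),
    f = ∑ i, hol n (p i) * hermStar n (hol n (p i))}

/-- `Σ`: sums of squares `∑ |p_i|²`, `p_i ∈ ℂ[z,z̄]`. -/
def SigmaFull (n : ℕ) : Set (CPoly n) :=
  {f | ∃ (k : ℕ) (p : Fin k → CPoly n), f = ∑ i, p i * hermStar n (p i)}

/-- Ideals `I ⊆ ℝ[x,y]`, viewed as sets of `*`-fixed elements of `ℂ[z,z̄]`. -/
def IsRealIdeal (n : ℕ) (I : Set (CPoly n)) : Prop :=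
  (∀ f ∈ I, hermStar n f = f) ∧ (0 : CPoly n) ∈ I ∧
    (∀ f ∈ I, ∀ g ∈ I, f + g ∈ I) ∧
    ∀ f : CPoly n, hermStar n f = f → ∀ g ∈ I, f * g ∈ I

/-- The semiring `Σ_h + I`. -/
def SigmaHPlus (n : ℕ) (I : Set (CPoly n)) : Set (CPoly n) :=
  {f | ∃ s ∈ SigmaH n, ∃ g ∈ I, f = s + g}

/-- The real zero set `V_ℝ(I) ⊆ ℂⁿ`. -/
def VR (n : ℕ) (I : Set (CPoly n)) : Set (Fin n → ℂ) :=
  {a | ∀ f ∈ I, evalAt a f = 0}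

/-- A subset `M` of `ℝ[x,y]` is archimedean if for every real `f` there is `c ∈ ℝ`
with `c ± f ∈ M`. -/
def IsArchSet (n : ℕ) (M : Set (CPoly n)) : Prop :=
  ∀ f : CPoly n, hermStar n f = f →
    ∃ c : ℝ, (C (c : ℂ) + f) ∈ M ∧ (C (c : ℂ) - f) ∈ M

/-- Hermitian modules in `ℝ[x,y]`. -/
def IsHermitianModule (n : ℕ) (M : Set (CPoly n)) : Prop :=
  (∀ f ∈ M, hermStar n f = f) ∧ (1 : CPoly n) ∈ M ∧
    (∀ f ∈ M, ∀ g ∈ M, f + g ∈ M) ∧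
    ∀ s ∈ SigmaH n, ∀ f ∈ M, s * f ∈ M

/-- The closed set `X_M ⊆ ℂⁿ` associated with a hermitian module. -/
def XM (n : ℕ) (M : Set (CPoly n)) : Set (Fin n → ℂ) :=
  {a | ∀ g ∈ M, 0 ≤ (evalAt a g).re}

/-- Hereditary calculus `ψ_T` for a tuple of bounded operators:
`ψ_T(z^α z̄^β) = T^{*β} T^α` (adjoints to the left). -/
def psiOp {n : ℕ} {E : Type u} [NormedAddCommGroup E] [InnerProductSpace ℂ E]
    [CompleteSpace E] (T : Fin n → E →L[ℂ] E) (f : CPoly n) : E →L[ℂ] E :=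
  ∑ m ∈ f.support, f.coeff m •
    ((List.ofFn fun j => (ContinuousLinearMap.adjoint (T j)) ^ (m (Sum.inr j))).prod *
     (List.ofFn fun j => (T j) ^ (m (Sum.inl j))).prod)

/-- Hereditary calculus `ψ_T` for a tuple of matrices. -/
def psiMat {n m : ℕ} (T : Fin n → Matrix (Fin m) (Fin m) ℂ) (f : CPoly n) :
    Matrix (Fin m) (Fin m) ℂ :=
  ∑ mo ∈ f.support, f.coeff mo •
    ((List.ofFn fun j => ((T j)ᴴ) ^ (mo (Sum.inr j))).prod *
     (List.ofFn fun j => (T j) ^ (mo (Sum.inl j))).prod)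

/-- A commuting tuple `T` on a Hilbert space `E` is subnormal if it extends to a
commuting tuple of bounded normal operators on a larger Hilbert space `E'`,
leaving (the image of) `E` invariant. -/
def IsSubnormal {n : ℕ} {E : Type u} [NormedAddCommGroup E] [InnerProductSpace ℂ E]
    [CompleteSpace E] (T : Fin n → E →L[ℂ] E) : Prop :=
  ∃ (E' : Type u) (_ : NormedAddCommGroup E') (_ : InnerProductSpace ℂ E')
    (_ : CompleteSpace E') (ι : E →ₗᵢ[ℂ] E') (N : Fin n → E' →L[ℂ] E'),
      (∀ i j, Commute (N i) (N j)) ∧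
      (∀ j, Commute (N j) (ContinuousLinearMap.adjoint (N j))) ∧
      ∀ j x, N j (ι x) = ι (T j x)

/-- The "diamond" ideal `I(a,b)`. -/
def Iab {n : ℕ} (a b : Fin n → ℂ) : Set (CPoly n) :=
  {f | evalPair a (fun j => (starRingEnd ℂ) (a j)) f = 0 ∧
       evalPair a (fun j => (starRingEnd ℂ) (b j)) f = 0 ∧
       evalPair b (fun j => (starRingEnd ℂ) (a j)) f = 0 ∧
       evalPair b (fun j => (starRingEnd ℂ) (b j)) f = 0}

/-- The degenerate ideal `J(a,U)`. -/
def Jau {n : ℕ} (a : Fin n → ℂ) (U : Matrix (Fin n) (Fin n) ℂ) : Set (CPoly n) :=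
  {f | evalAt a f = 0 ∧
    U.mulVec (fun k => evalAt a (pderiv (Sum.inl k) f)) = 0 ∧
    (U.map (starRingEnd ℂ)).mulVec (fun k => evalAt a (pderiv (Sum.inr k) f)) = 0 ∧
    Matrix.trace
      (U * Matrix.of fun j k => evalAt a (pderiv (Sum.inr k) (pderiv (Sum.inl j) f))) = 0}

/-!
If `M` has (Q) and `L ≥ 0` on `M`, then `L f + ε L 1 ≥ 0` for every `f ≥ 0` on `X_M` and `ε > 0`,
so `L` is nonnegative on all polynomials that are nonnegative on `X_M`. By Haviland's theorem it is
integration over `X_M`. Here polynomials on a closed set are an adapted space in Choquet's sense: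
`f` is `o(q)` at infinity for the polynomial `q = (1 + ‖z‖²)(1 + f²)`. The Riesz extension theorem
on pairs (polynomial, compactly supported function) and the Riesz–Markov theorem give a measure `μ`
with `∫ g ≤ L f` whenever `g ≤ f` has compact support; cutting `f` off outside a large compact set
costs at most `ε q`, whence `∫ f ≤ L f`, with equality by passing to `-f`.

If `M` is archimedean, `1` is an order unit for the cone `M`, so for a real `f ∉ M` some `L ≥ 0`
on `M` has `L 1 = 1` and `L f ≤ 0`. A representing measure of `L` on `X_M` is nonzero, which
is impossible when `f > 0` on `X_M`.
-/

open Asymptotics Filter Topology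
open scoped CompactlySupported

section RieszExtension

variable {V W : Type*} [AddCommGroup V] [Module ℝ V] [AddCommGroup W] [Module ℝ W]

theorem exists_linearMap_prod_extension_nonneg (s : PointedCone ℝ (V × W)) (φ : V →ₗ[ℝ] ℝ)
    (hφ : ∀ v, (v, (0 : W)) ∈ s → 0 ≤ φ v) (hs : ∀ w, ∃ v, (v, w) ∈ s) :
    ∃ Φ : V × W →ₗ[ℝ] ℝ, (∀ v, Φ (v, 0) = φ v) ∧ ∀ p ∈ s, 0 ≤ Φ p := by
  let φ₀ : (V × W) →ₗ.[ℝ] ℝ :=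
    { domain := LinearMap.ker (LinearMap.snd ℝ V W)
      toFun := (φ ∘ₗ LinearMap.fst ℝ V W) ∘ₗ Submodule.subtype _ }
  have nonneg : ∀ p : φ₀.domain, (p : V × W) ∈ s → 0 ≤ φ₀ p := by
    rintro ⟨⟨v, w⟩, rfl : w = 0⟩ hp
    exact hφ v hp
  have dense : ∀ p, ∃ p₀ : φ₀.domain, (p₀ : V × W) + p ∈ s := by
    rintro ⟨v, w⟩
    obtain ⟨v', hv'⟩ := hs w
    exact ⟨⟨(v' - v, 0), rfl⟩, by simpa using hv'⟩
  obtain ⟨Φ, hΦ, hΦs⟩ := riesz_extension s φ₀ nonneg dense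
  exact ⟨Φ, fun v ↦ hΦ ⟨(v, 0), rfl⟩, hΦs⟩

end RieszExtension

section Separation

variable {S : Type*} [AddCommGroup S] [Module ℝ S] {M : PointedCone ℝ S} {e f : S}

theorem exists_linearMap_nonneg_apply_eq_one (hunit : ∀ g, ∃ c : ℝ, c • e + g ∈ M)
    (he : -e ∉ M) : ∃ L : S →ₗ[ℝ] ℝ, (∀ g ∈ M, 0 ≤ L g) ∧ L e = 1 := by
  have he₀ : e ≠ 0 := fun h ↦ he (by simp [h])
  have nonneg_of_smul_mem {t : ℝ} (ht : t • e ∈ M) : 0 ≤ t := by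
    by_contra! ht_neg
    have : -e = (-t)⁻¹ • t • e := by
      rw [smul_smul, inv_neg, neg_mul, inv_mul_cancel₀ ht_neg.ne, neg_one_smul]
    exact he (this ▸ M.smul_mem (inv_nonneg.2 (neg_nonneg.2 ht_neg.le)) ht)
  let φ : S →ₗ.[ℝ] ℝ := LinearPMap.mkSpanSingleton e 1 he₀
  have φ_smul (t : ℝ) (ht : t • e ∈ φ.domain) : φ ⟨t • e, ht⟩ = t :=
    (LinearPMap.mkSpanSingleton'_apply e (1 : ℝ) _ t ht).trans (mul_one t)
  obtain ⟨L, hLφ, hL⟩ := riesz_extension M φ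
    (by
      rintro ⟨g, hg⟩ hgM
      obtain ⟨t, rfl⟩ := Submodule.mem_span_singleton.1 hg
      exact (nonneg_of_smul_mem hgM).trans_eq (φ_smul t hg).symm)
    (fun g ↦ (hunit g).imp' (fun c ↦ ⟨c • e, Submodule.mem_span_singleton.2 ⟨c, rfl⟩⟩)
      fun _ hc ↦ hc)
  exact ⟨L, hL, (hLφ ⟨e, Submodule.mem_span_singleton_self e⟩).trans
    (LinearPMap.mkSpanSingleton_apply ℝ ℝ he₀ 1)⟩

-- Adjoin `-f` to `M`: the larger cone omits `-e`, since `-e = m - t • f` would put `t • f` in `M`.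
theorem exists_linearMap_nonneg_apply_nonpos (he : e ∈ M)
    (hunit : ∀ g, ∃ c : ℝ, c • e + g ∈ M) (hf : f ∉ M) :
    ∃ L : S →ₗ[ℝ] ℝ, (∀ g ∈ M, 0 ≤ L g) ∧ L e = 1 ∧ L f ≤ 0 := by
  have neg_e_notMem : -e ∉ M := by
    intro hneg
    obtain ⟨c, hc⟩ := hunit f
    have : f = |c| • -e + (|c| - c) • e + (c • e + f) := by module
    exact hf (this ▸ M.add_mem (M.add_mem (M.smul_mem (abs_nonneg c) hneg)
      (M.smul_mem (sub_nonneg.2 (le_abs_self c)) he)) hc)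
  have neg_e_notMem_sup : -e ∉ M ⊔ PointedCone.hull ℝ {-f} := by
    intro hneg
    obtain ⟨m, hm, _, hz, hmz⟩ := Submodule.mem_sup.1 hneg
    obtain ⟨t, rfl⟩ := Submodule.mem_span_singleton.1 hz
    have htf : t • f = m + e := by
      rw [smul_neg, ← sub_eq_add_neg, sub_eq_iff_eq_add] at hmz
      rw [hmz]; abel
    rcases eq_or_ne t 0 with rfl | ht
    · exact neg_e_notMem (by simpa [← hmz] using hm)
    · exact hf ((inv_smul_smul₀ ht f) ▸ M.smul_mem t⁻¹.2 (htf ▸ M.add_mem hm he))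
  obtain ⟨L, hL, hLe⟩ := exists_linearMap_nonneg_apply_eq_one
    (fun g ↦ (hunit g).imp fun _ hc ↦ Submodule.mem_sup_left hc) neg_e_notMem_sup
  have hLf : 0 ≤ L (-f) := hL _ (Submodule.mem_sup_right (Submodule.mem_span_singleton_self _))
  exact ⟨L, fun g hg ↦ hL g (Submodule.mem_sup_left hg), hLe, by simpa using hLf⟩

end Separation

section Integrability

variable {X E : Type*} [MeasurableSpace X] {μ : Measure X} [NormedAddCommGroup E]

theorem integrable_of_tendsto_of_integral_norm_le {F : ℕ → X → E} {f : X → E} {c : ℝ}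
    (hF : ∀ k, Integrable (F k) μ) (hlim : ∀ᵐ x ∂μ, Tendsto (F · x) atTop (𝓝 (f x)))
    (hle : ∀ k, ∫ x, ‖F k x‖ ∂μ ≤ c) : Integrable f μ := by
  refine ⟨aestronglyMeasurable_of_tendsto_ae atTop (fun k ↦ (hF k).1) hlim, ?_⟩
  have enorm_le (k : ℕ) : ∫⁻ x, ‖F k x‖ₑ ∂μ ≤ ENNReal.ofReal c := by
    rw [← ofReal_integral_norm_eq_lintegral_enorm (hF k)]
    exact ENNReal.ofReal_le_ofReal (hle k)
  calc ∫⁻ x, ‖f x‖ₑ ∂μ = ∫⁻ x, liminf (fun k ↦ ‖F k x‖ₑ) atTop ∂μ :=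
        lintegral_congr_ae (hlim.mono fun x hx ↦ hx.enorm.liminf_eq.symm)
    _ ≤ liminf (fun k ↦ ∫⁻ x, ‖F k x‖ₑ ∂μ) atTop :=
        lintegral_liminf_le' fun k ↦ (hF k).1.enorm
    _ ≤ ENNReal.ofReal c := liminf_le_of_le (by isBoundedDefault) fun b hb ↦
        let ⟨k, hk⟩ := hb.exists; hk.trans (enorm_le k)
    _ < ⊤ := ENNReal.ofReal_lt_top

end Integrability

section Cutoff

variable {X : Type*} [TopologicalSpace X] [R1Space X] [LocallyCompactSpace X] {f q : C(X, ℝ)}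

theorem exists_compactlySupported_abs_sub_le (hfq : f =o[cocompact X] q) (hq : 0 ≤ q) {ε : ℝ}
    (hε : 0 < ε) :
    ∃ g : C_c(X, ℝ), ∀ x, |g x| ≤ |f x| ∧ |f x - g x| ≤ ε * q x := by
  obtain ⟨K, hK, hKε⟩ := mem_cocompact.1 (hfq.def hε)
  obtain ⟨η, hη_one, -, hη_supp, hη⟩ :=
    exists_continuous_one_zero_of_isCompact hK isClosed_empty (Set.disjoint_empty K)
  refine ⟨⟨η * f, hη_supp.mul_right⟩, fun x ↦ ⟨?_, ?_⟩⟩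
  · calc |η x * f x| = η x * |f x| := by rw [abs_mul, abs_of_nonneg (hη x).1]
      _ ≤ |f x| := mul_le_of_le_one_left (abs_nonneg _) (hη x).2
  · by_cases hx : x ∈ K
    · calc |f x - η x * f x| = 0 := by simp [hη_one hx]
        _ ≤ ε * q x := mul_nonneg hε.le (hq x)
    · calc |f x - η x * f x| = (1 - η x) * |f x| := by
            rw [← one_sub_mul, abs_mul, abs_of_nonneg (sub_nonneg.2 (hη x).2)]
        _ ≤ |f x| := mul_le_of_le_one_left (abs_nonneg _) (sub_le_self 1 (hη x).1)
        _ ≤ ε * |q x| := hKε hx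
        _ = ε * q x := congrArg (ε * ·) (abs_of_nonneg (hq x))

theorem integrable_of_isLittleO_of_integral_le [MeasurableSpace X] [BorelSpace X] {μ : Measure X}
    [IsFiniteMeasureOnCompacts μ] (hfq : f =o[cocompact X] q) (hle : |f| ≤ q) {c : ℝ}
    (hc : ∀ g : C_c(X, ℝ), g.toContinuousMap ≤ q → ∫ x, g x ∂μ ≤ c) : Integrable f μ := by
  choose g hg using fun k : ℕ ↦ exists_compactlySupported_abs_sub_le hfq
    ((abs_nonneg f).trans hle) (Nat.one_div_pos_of_nat (α := ℝ) (n := k))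
  have tendsto_g (x : X) : Tendsto (g · x) atTop (𝓝 (f x)) := by
    have error_tendsto : Tendsto (fun k : ℕ ↦ 1 / ((k : ℝ) + 1) * q x) atTop (𝓝 0) := by
      simpa only [zero_mul] using tendsto_one_div_add_atTop_nhds_zero_nat.mul_const (q x)
    refine tendsto_iff_norm_sub_tendsto_zero.2
      (squeeze_zero (fun _ ↦ norm_nonneg _) (fun k ↦ ?_) error_tendsto)
    rw [norm_sub_rev]
    exact (hg k x).2
  exact integrable_of_tendsto_of_integral_norm_le
    (fun k ↦ (g k).continuous.integrable_of_hasCompactSupport (g k).hasCompactSupport)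
    (.of_forall tendsto_g) fun k ↦ hc |g k| fun x ↦ (hg k x).1.trans (hle x)

end Cutoff

section AdaptedSpace

variable {X S : Type*} [TopologicalSpace X] [AddCommGroup S] [Module ℝ S]

/-- Adapted spaces of continuous functions in the sense of Choquet: every member is `o` of a
member at infinity, and no point is a common zero. The space is presented as the range of a linear
map `ρ`, which need not be injective: distinct polynomials may agree on a given set. -/
structure IsAdapted (ρ : S →ₗ[ℝ] C(X, ℝ)) : Prop where
  exists_apply_pos : ∀ x, ∃ f, 0 < ρ f x
  exists_isLittleO : ∀ f, ∃ q, |ρ f| ≤ ρ q ∧ ρ f =o[cocompact X] ρ q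

namespace IsAdapted

variable {ρ : S →ₗ[ℝ] C(X, ℝ)}

theorem exists_nonneg_one_le (hρ : IsAdapted ρ) {K : Set X} (hK : IsCompact K) :
    ∃ f, 0 ≤ ρ f ∧ ∀ x ∈ K, 1 ≤ ρ f x := by
  refine hK.induction_on ⟨0, by simp, by simp⟩ (fun A B hAB ⟨f, hf, hfB⟩ ↦
    ⟨f, hf, fun x hx ↦ hfB x (hAB hx)⟩) ?_ ?_
  · rintro A B ⟨f, hf, hfA⟩ ⟨g, hg, hgB⟩
    refine ⟨f + g, by simpa using add_nonneg hf hg, ?_⟩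
    rintro x (hx | hx)
    · simpa using le_add_of_le_of_nonneg (hfA x hx) (hg x)
    · simpa using le_add_of_nonneg_of_le (hf x) (hgB x hx)
  · intro x _
    obtain ⟨f, hfx⟩ := hρ.exists_apply_pos x
    obtain ⟨q, hfq, -⟩ := hρ.exists_isLittleO f
    have hq : 0 ≤ ρ q := (abs_nonneg _).trans hfq
    have hqx : 0 < ρ q x := hfx.trans_le ((le_abs_self _).trans (hfq x))
    have hq_gt : ∀ᶠ y in 𝓝 x, ρ q x / 2 < ρ q y :=
      (ρ q).continuous.continuousAt.eventually (lt_mem_nhds (half_lt_self hqx))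
    refine ⟨_, mem_nhdsWithin_of_mem_nhds hq_gt, (ρ q x / 2)⁻¹ • q, ?_, fun y hy ↦ ?_⟩
    · rw [map_smul]
      exact smul_nonneg (by positivity) hq
    · rw [map_smul, ContinuousMap.smul_apply, smul_eq_mul, inv_mul_eq_div,
        one_le_div (half_pos hqx)]
      exact hy.le

theorem exists_compactlySupported_le (hρ : IsAdapted ρ) (g : C_c(X, ℝ)) :
    ∃ f, g.toContinuousMap ≤ ρ f := by
  obtain ⟨B, hB⟩ := g.hasCompactSupport.exists_bound_of_continuous g.continuous
  obtain ⟨u, hu, hu_one⟩ := hρ.exists_nonneg_one_le g.hasCompactSupport.isCompact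
  refine ⟨|B| • u, fun x ↦ ?_⟩
  change g x ≤ ρ (|B| • u) x
  rw [map_smul, ContinuousMap.smul_apply, smul_eq_mul]
  by_cases hx : x ∈ tsupport g
  · calc g x ≤ |B| := (le_abs_self _).trans ((hB x).trans (le_abs_self B))
      _ ≤ |B| * ρ u x := le_mul_of_one_le_right (abs_nonneg B) (hu_one x hx)
  · exact (image_eq_zero_of_notMem_tsupport hx).trans_le (mul_nonneg (abs_nonneg B) (hu x))

theorem exists_positiveLinearMap_le (hρ : IsAdapted ρ) {L : S →ₗ[ℝ] ℝ}
    (hL : ∀ f, 0 ≤ ρ f → 0 ≤ L f) :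
    ∃ Λ : C_c(X, ℝ) →ₚ[ℝ] ℝ, ∀ (g : C_c(X, ℝ)) (f : S), g.toContinuousMap ≤ ρ f → Λ g ≤ L f := by
  let ι : C_c(X, ℝ) →ₗ[ℝ] X → ℝ := { toFun := (⇑), map_add' _ _ := rfl, map_smul' _ _ := rfl }
  let s : PointedCone ℝ (S × C_c(X, ℝ)) :=
    (PointedCone.positive ℝ (X → ℝ)).comap ((ContinuousMap.coeFnLinearMap ℝ ∘ₗ ρ).coprod ι)
  have mem_s (f : S) (g : C_c(X, ℝ)) : (f, g) ∈ s ↔ ∀ x, 0 ≤ ρ f x + g x := Iff.rfl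
  obtain ⟨Φ, hΦL, hΦ⟩ := exists_linearMap_prod_extension_nonneg s L
    (fun f hf ↦ hL f fun x ↦ by simpa using (mem_s f 0).1 hf x)
    (fun g ↦ (hρ.exists_compactlySupported_le (-g)).imp fun f hf ↦ (mem_s f g).2 fun x ↦
      neg_le_iff_add_nonneg.1 (hf x))
  refine ⟨.mk₀ (Φ ∘ₗ LinearMap.inr ℝ S C_c(X, ℝ)) fun g hg ↦ hΦ _ ((mem_s 0 g).2 fun x ↦ ?_),
    fun g f hgf ↦ ?_⟩
  · simpa using hg x
  · have : 0 ≤ Φ (f, -g) := hΦ _ ((mem_s f (-g)).2 fun x ↦ sub_nonneg.2 (hgf x))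
    have : Φ (f, -g) = L f - Φ (0, g) := by rw [← hΦL, ← map_sub]; simp
    change Φ (0, g) ≤ L f
    linarith

variable [T2Space X] [LocallyCompactSpace X] [MeasurableSpace X] [BorelSpace X]

theorem integral_le_of_forall_compactlySupported (hρ : IsAdapted ρ) {L : S →ₗ[ℝ] ℝ}
    {μ : Measure X} [IsFiniteMeasureOnCompacts μ] (hρ_int : ∀ f, Integrable (ρ f) μ)
    (hμ : ∀ (g : C_c(X, ℝ)) (f : S), g.toContinuousMap ≤ ρ f → ∫ x, g x ∂μ ≤ L f) (f : S) :
    ∫ x, ρ f x ∂μ ≤ L f := by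
  obtain ⟨q, hfq, hfq_o⟩ := hρ.exists_isLittleO f
  have le_add {ε : ℝ} (hε : 0 < ε) : ∫ x, ρ f x ∂μ ≤ L f + ε * (L q + ∫ x, ρ q x ∂μ) := by
    obtain ⟨g, hg⟩ := exists_compactlySupported_abs_sub_le hfq_o ((abs_nonneg _).trans hfq) hε
    have hg_int : Integrable g μ := g.continuous.integrable_of_hasCompactSupport g.hasCompactSupport
    have integral_f_le : ∫ x, ρ f x ∂μ ≤ ∫ x, g x ∂μ + ε * ∫ x, ρ q x ∂μ := by
      rw [← integral_const_mul, ← integral_add hg_int ((hρ_int q).const_mul ε)]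
      exact integral_mono (hρ_int f) (hg_int.add ((hρ_int q).const_mul ε)) fun x ↦
        sub_le_iff_le_add'.1 ((le_abs_self _).trans (hg x).2)
    have integral_g_le : ∫ x, g x ∂μ ≤ L f + ε * L q := by
      rw [← smul_eq_mul, ← map_smul, ← map_add]
      refine hμ g (f + ε • q) fun x ↦ ?_
      rw [map_add, map_smul]
      have : g x - ρ f x ≤ ε * ρ q x :=
        (le_abs_self _).trans ((abs_sub_comm _ _).trans_le (hg x).2)
      exact sub_le_iff_le_add'.1 this
    linarith
  have tendsto_zero : Tendsto (fun ε ↦ L f + ε * (L q + ∫ x, ρ q x ∂μ)) (𝓝[>] 0) (𝓝 (L f)) :=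
    tendsto_nhdsWithin_of_tendsto_nhds (Continuous.tendsto' (by fun_prop) _ _ (by simp))
  exact ge_of_tendsto tendsto_zero (eventually_mem_nhdsWithin.mono fun ε hε ↦ le_add hε)

theorem exists_measure_integral_eq (hρ : IsAdapted ρ) {L : S →ₗ[ℝ] ℝ}
    (hL : ∀ f, 0 ≤ ρ f → 0 ≤ L f) :
    ∃ μ : Measure X, ∀ f, Integrable (ρ f) μ ∧ L f = ∫ x, ρ f x ∂μ := by
  obtain ⟨Λ, hΛ⟩ := hρ.exists_positiveLinearMap_le hL
  have hμ (g : C_c(X, ℝ)) (f : S) (hgf : g.toContinuousMap ≤ ρ f) :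
      ∫ x, g x ∂(RealRMK.rieszMeasure Λ) ≤ L f :=
    (RealRMK.integral_rieszMeasure Λ g).trans_le (hΛ g f hgf)
  have hρ_int (f : S) : Integrable (ρ f) (RealRMK.rieszMeasure Λ) := by
    obtain ⟨q, hfq, hfq_o⟩ := hρ.exists_isLittleO f
    exact integrable_of_isLittleO_of_integral_le hfq_o hfq fun g hg ↦ hμ g q hg
  have integral_le := hρ.integral_le_of_forall_compactlySupported hρ_int hμ
  refine ⟨RealRMK.rieszMeasure Λ, fun f ↦ ⟨hρ_int f, le_antisymm ?_ (integral_le f)⟩⟩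
  simpa [integral_neg] using integral_le (-f)

end IsAdapted

end AdaptedSpace

section HermitianPolynomials

variable {n : ℕ}

theorem evalAt_hermStar (a : Fin n → ℂ) (f : CPoly n) :
    evalAt a (hermStar n f) = starRingEnd ℂ (evalAt a f) := by
  let ev : CPoly n →+* ℂ := eval (Sum.elim a fun j ↦ starRingEnd ℂ (a j))
  have : ev.comp (hermStar n) = (starRingEnd ℂ).comp ev := by
    refine MvPolynomial.ringHom_ext (fun r ↦ by simp [ev, hermStar]) ?_
    rintro (j | j) <;> simp [ev, hermStar]
  exact congrArg (· f) this

theorem continuous_evalAt (f : CPoly n) : Continuous fun a : Fin n → ℂ ↦ evalAt a f := by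
  refine (continuous_eval f).comp (continuous_pi ?_)
  rintro (j | j)
  · exact continuous_apply j
  · exact continuous_conj.comp (continuous_apply j)

theorem isClosed_XM (M : Set (CPoly n)) : IsClosed (XM n M) := by
  simp only [XM, Set.ofPred_forall]
  exact isClosed_biInter fun g _ ↦
    isClosed_le continuous_const (continuous_re.comp (continuous_evalAt g))

variable (n) in
/-- The real polynomial ring `ℝ[x,y]`, encoded as the fixed ring of the involution `*`. -/
def realPoly : Subalgebra ℝ (CPoly n) where
  __ := (hermStar n).eqLocus (RingHom.id _)
  algebraMap_mem' r := by simp [hermStar, MvPolynomial.algebraMap_eq]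

theorem mem_realPoly {f : CPoly n} : f ∈ realPoly n ↔ hermStar n f = f := Iff.rfl

theorem evalAt_im_eq_zero (a : Fin n → ℂ) (f : realPoly n) : (evalAt a (f : CPoly n)).im = 0 := by
  rw [← conj_eq_iff_im, ← evalAt_hermStar, mem_realPoly.1 f.2]

theorem normZ_mem_realPoly : normZ n ∈ realPoly n := by
  simp [mem_realPoly, hermStar, normZ, mul_comm]

theorem evalAt_normZ_re (a : Fin n → ℂ) : (evalAt a (normZ n)).re = ∑ j, ‖a j‖ ^ 2 := by
  simp [evalAt, evalPair, normZ, mul_conj, -ofReal_pow, normSq_eq_norm_sq]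

/-- Real polynomials as continuous functions on a set `K ⊆ ℂⁿ`. Their values are real, so taking
real parts, which only serves to land in `ℝ`, is multiplicative. -/
def evalOn (K : Set (Fin n → ℂ)) : realPoly n →ₐ[ℝ] C(K, ℝ) where
  toFun f := ⟨fun a ↦ (evalAt a.1 f.1).re,
    (continuous_re.comp (continuous_evalAt f.1)).comp continuous_subtype_val⟩
  map_one' := by ext; simp [evalAt, evalPair]
  map_zero' := by ext; simp [evalAt, evalPair]
  map_add' f g := by ext; simp [evalAt, evalPair]
  map_mul' f g := by
    ext a
    have := evalAt_im_eq_zero a.1 f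
    simp_all [evalAt, evalPair]
  commutes' r := by ext; simp [evalAt, evalPair]

theorem evalOn_apply (K : Set (Fin n → ℂ)) (f : realPoly n) (a : K) :
    evalOn K f a = (evalAt a.1 f.1).re := rfl

theorem abs_le_one_add_sq (t : ℝ) : |t| ≤ 1 + t ^ 2 := by
  rw [← sq_abs]
  nlinarith [sq_nonneg (|t| - 1)]

theorem norm_le_one_add_evalAt_normZ (a : Fin n → ℂ) : ‖a‖ ≤ 1 + (evalAt a (normZ n)).re := by
  rw [evalAt_normZ_re]
  refine (pi_norm_le_iff_of_nonneg (by positivity)).2 fun j ↦ ?_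
  calc ‖a j‖ = |‖a j‖| := (abs_norm _).symm
    _ ≤ 1 + ‖a j‖ ^ 2 := abs_le_one_add_sq _
    _ ≤ 1 + ∑ i, ‖a i‖ ^ 2 := by
      gcongr
      exact Finset.single_le_sum (f := fun i ↦ ‖a i‖ ^ 2) (fun i _ ↦ by positivity)
        (Finset.mem_univ j)

theorem isAdapted_evalOn {K : Set (Fin n → ℂ)} (hK : IsClosed K) :
    IsAdapted (evalOn K).toLinearMap where
  exists_apply_pos a := ⟨1, by simp⟩
  exists_isLittleO f := by
    let N : realPoly n := ⟨normZ n, normZ_mem_realPoly⟩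
    have q_apply (a : K) : evalOn K ((1 + N) * (1 + f ^ 2)) a =
        (1 + evalOn K N a) * (1 + evalOn K f a ^ 2) := by simp
    have N_nonneg (a : K) : 0 ≤ evalOn K N a := by
      rw [evalOn_apply, evalAt_normZ_re]
      positivity
    have tendsto_N : Tendsto (fun a ↦ 1 + evalOn K N a) (cocompact K) atTop :=
      tendsto_atTop_mono (fun a ↦ norm_le_one_add_evalAt_normZ a.1)
        (tendsto_norm_cocompact_atTop.comp hK.isClosedEmbedding_subtypeVal.tendsto_cocompact)
    refine ⟨(1 + N) * (1 + f ^ 2), fun a ↦ ?_, ?_⟩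
    · calc |evalOn K f a| ≤ 1 + evalOn K f a ^ 2 := abs_le_one_add_sq _
        _ ≤ (1 + evalOn K N a) * (1 + evalOn K f a ^ 2) :=
          le_mul_of_one_le_left (by positivity) (le_add_of_nonneg_right (N_nonneg a))
        _ = _ := (q_apply a).symm
    · have one_isLittleO : (fun _ ↦ (1 : ℝ)) =o[cocompact K] fun a ↦ 1 + evalOn K N a :=
        (isLittleO_one_left_iff ℝ).2 (tendsto_norm_atTop_atTop.comp tendsto_N)
      have f_isBigO : evalOn K f =O[cocompact K] fun a ↦ 1 + evalOn K f a ^ 2 :=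
        .of_bound' (.of_forall fun a ↦ (abs_le_one_add_sq _).trans (le_abs_self _))
      exact (one_isLittleO.mul_isBigO f_isBigO).congr (fun a ↦ one_mul _) fun a ↦ (q_apply a).symm

theorem haviland_exists_measure_integral_eq {K : Set (Fin n → ℂ)} (hK : IsClosed K)
    {L : realPoly n →ₗ[ℝ] ℝ} (hL : ∀ f, 0 ≤ evalOn K f → 0 ≤ L f) :
    ∃ μ : Measure (Fin n → ℂ), μ Kᶜ = 0 ∧ ∀ f : realPoly n,
      Integrable (fun a ↦ (evalAt a f.1).re) μ ∧ L f = ∫ a, (evalAt a f.1).re ∂μ := by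
  have := hK.isClosedEmbedding_subtypeVal.locallyCompactSpace
  obtain ⟨ν, hν⟩ := (isAdapted_evalOn hK).exists_measure_integral_eq hL
  have emb : MeasurableEmbedding (Subtype.val : K → Fin n → ℂ) := .subtype_coe hK.measurableSet
  refine ⟨ν.map Subtype.val, ?_, fun f ↦ ⟨emb.integrable_map_iff.2 (hν f).1, ?_⟩⟩
  · rw [emb.map_apply, Set.preimage_compl, Subtype.coe_preimage_self, Set.compl_univ,
      measure_empty]
  · rw [emb.integral_map]
    exact (hν f).2

end HermitianPolynomials

section QuillenAndMoments

variable {n : ℕ}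

/-- The Quillen property (Q) of a subset `M` of `ℝ[x,y]`. -/
def HasQuillenProperty (M : Set (CPoly n)) : Prop :=
  ∀ f : CPoly n, hermStar n f = f → (∀ a ∈ XM n M, 0 < (evalAt a f).re) → f ∈ M

/-- The strong moment property (SMP) of a subset `M` of `ℝ[x,y]`. Functionals are given on all of
`ℂ[z,z̄]`, but only their restrictions to `ℝ[x,y]` are constrained and represented. -/
def HasStrongMomentProperty (M : Set (CPoly n)) : Prop :=
  ∀ L : CPoly n →ₗ[ℝ] ℝ, (∀ g ∈ M, 0 ≤ L g) →
    ∃ μ : Measure (Fin n → ℂ), μ (XM n M)ᶜ = 0 ∧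
      ∀ f : CPoly n, hermStar n f = f →
        Integrable (fun a ↦ (evalAt a f).re) μ ∧ L f = ∫ a, (evalAt a f).re ∂μ

theorem HasQuillenProperty.hasStrongMomentProperty {M : Set (CPoly n)}
    (hM : HasQuillenProperty M) : HasStrongMomentProperty M := by
  intro L hL
  have nonneg_of_nonneg_on_XM (f : realPoly n) (hf : 0 ≤ evalOn (XM n M) f) : 0 ≤ L f := by
    have add_mem (ε : ℝ) (hε : 0 < ε) : (f + ε • 1 : CPoly n) ∈ M := by
      let p : realPoly n := f + ε • 1
      refine hM p p.2 fun a ha ↦ ?_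
      have : evalOn (XM n M) p ⟨a, ha⟩ = evalOn (XM n M) f ⟨a, ha⟩ + ε := by simp [p]
      exact (add_pos_of_nonneg_of_pos (hf ⟨a, ha⟩) hε).trans_eq this.symm
    have tendsto_L : Tendsto (fun ε : ℝ ↦ L f + ε * L 1) (𝓝[>] 0) (𝓝 (L f)) :=
      tendsto_nhdsWithin_of_tendsto_nhds (Continuous.tendsto' (by fun_prop) _ _ (by simp))
    refine ge_of_tendsto tendsto_L (eventually_mem_nhdsWithin.mono fun ε hε ↦ ?_)
    simpa using hL _ (add_mem ε hε)
  obtain ⟨μ, hμ, hLμ⟩ :=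
    haviland_exists_measure_integral_eq (isClosed_XM M)
      (L := L ∘ₗ (realPoly n).val.toLinearMap) nonneg_of_nonneg_on_XM
  exact ⟨μ, hμ, fun f hf ↦ hLμ ⟨f, hf⟩⟩

theorem integral_pos_of_ae_pos {X : Type*} [MeasurableSpace X] {μ : Measure X} [NeZero μ]
    {f : X → ℝ} (hf : Integrable f μ) (hpos : ∀ᵐ x ∂μ, 0 < f x) : 0 < ∫ x, f x ∂μ := by
  have nonneg : 0 ≤ᵐ[μ] f := hpos.mono fun _ hx ↦ hx.le
  refine (integral_nonneg_of_ae nonneg).lt_of_ne' fun h ↦ ?_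
  have eq_zero := (integral_eq_zero_iff_of_nonneg_ae nonneg hf).1 h
  obtain ⟨x, hx, hx'⟩ := (hpos.and eq_zero).exists
  exact hx.ne' hx'

theorem real_smul_eq_C_mul (r : ℝ) (f : CPoly n) : r • f = C (r : ℂ) * f := by
  rw [← smul_eq_C_mul]
  exact (algebraMap_smul ℂ r f).symm

theorem HasStrongMomentProperty.hasQuillenProperty {M : PointedCone ℝ (CPoly n)}
    (hM : ∀ f ∈ M, hermStar n f = f) (h1 : 1 ∈ M) (hArch : IsArchSet n M)
    (hSMP : HasStrongMomentProperty (M : Set (CPoly n))) :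
    HasQuillenProperty (M : Set (CPoly n)) := by
  intro f hf hpos
  by_contra hfM
  let M' : PointedCone ℝ (realPoly n) := M.comap (realPoly n).val.toLinearMap
  have order_unit (g : realPoly n) : ∃ c : ℝ, c • 1 + g ∈ M' := by
    obtain ⟨c, hc, -⟩ := hArch g g.2
    refine ⟨c, ?_⟩
    change c • (1 : CPoly n) + g ∈ M
    rwa [real_smul_eq_C_mul, mul_one]
  obtain ⟨L', hL'_nonneg, hL'_one, hL'f⟩ :=
    exists_linearMap_nonneg_apply_nonpos (M := M') (f := ⟨f, hf⟩) h1 order_unit hfM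
  obtain ⟨L, rfl⟩ := L'.exists_extend (p := Subalgebra.toSubmodule (realPoly n))
  obtain ⟨μ, hμ, hLμ⟩ := hSMP L fun g hg ↦ hL'_nonneg ⟨g, hM g hg⟩ hg
  obtain ⟨hf_int, hLf⟩ := hLμ f hf
  have : NeZero μ := ⟨by
    rintro rfl
    simpa using hL'_one.symm.trans (hLμ 1 (map_one _)).2⟩
  have mem_XM : ∀ᵐ a ∂μ, a ∈ XM n M := mem_ae_iff.2 hμ
  have integral_pos : 0 < ∫ a, (evalAt a f).re ∂μ :=
    integral_pos_of_ae_pos hf_int (mem_XM.mono hpos)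
  exact integral_pos.not_ge (hLf.symm.trans_le hL'f)

theorem IsHermitianModule.real_smul_mem {M : Set (CPoly n)} (hM : IsHermitianModule n M)
    {r : ℝ} (hr : 0 ≤ r) {f : CPoly n} (hf : f ∈ M) : r • f ∈ M := by
  have hol_C : hol n (C (√r : ℂ)) = C (√r : ℂ) := by simp [hol]
  have hermStar_C : hermStar n (C (√r : ℂ)) = C (√r : ℂ) := by simp [hermStar]
  rw [real_smul_eq_C_mul]
  refine hM.2.2.2 _ ⟨1, fun _ ↦ C (√r : ℂ), ?_⟩ f hf
  rw [Fin.sum_univ_one, hol_C, hermStar_C, ← C_mul, ← ofReal_mul, Real.mul_self_sqrt hr]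

/-- The convex cone underlying a hermitian module: closedness under multiplication by nonnegative
constants is the only part of closedness under `Σ_h` that it retains. -/
def IsHermitianModule.toPointedCone {M : Set (CPoly n)} (hM : IsHermitianModule n M) :
    PointedCone ℝ (CPoly n) where
  carrier := M
  add_mem' := fun {f g} hf hg ↦ hM.2.2.1 f hf g hg
  zero_mem' := by simpa using hM.real_smul_mem le_rfl hM.2.1
  smul_mem' r f hf := hM.real_smul_mem r.2 hf

end QuillenAndMoments

theorem statement16_general (n : ℕ) (M : PointedCone ℝ (CPoly n))
    (hM : ∀ f ∈ M, hermStar n f = f) (h1 : 1 ∈ M) :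
    (HasQuillenProperty (M : Set (CPoly n)) → HasStrongMomentProperty (M : Set (CPoly n))) ∧
      (IsArchSet n M → HasStrongMomentProperty (M : Set (CPoly n)) →
        HasQuillenProperty (M : Set (CPoly n))) :=
  ⟨HasQuillenProperty.hasStrongMomentProperty,
    HasStrongMomentProperty.hasQuillenProperty hM h1⟩

/-- Lemma `2.2`: for a hermitian module `M ⊆ ℝ[x,y]`, the Quillen property (Q) implies
the strong moment property (SMP); conversely, if `M` is archimedean then (SMP)
implies (Q). -/
theorem statement16 (n : ℕ) (hn : 0 < n) (M : Set (CPoly n))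
    (hM : IsHermitianModule n M) :
    ((∀ f : CPoly n, hermStar n f = f →
        (∀ a ∈ XM n M, 0 < (evalAt a f).re) → f ∈ M) →
      ∀ L : CPoly n →ₗ[ℝ] ℝ, (∀ g ∈ M, 0 ≤ L g) →
        ∃ μ : Measure (Fin n → ℂ), μ (XM n M)ᶜ = 0 ∧
          ∀ f : CPoly n, hermStar n f = f →
            Integrable (fun a => (evalAt a f).re) μ ∧
            L f = ∫ a, (evalAt a f).re ∂μ) ∧
    (IsArchSet n M →
      (∀ L : CPoly n →ₗ[ℝ] ℝ, (∀ g ∈ M, 0 ≤ L g) →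
        ∃ μ : Measure (Fin n → ℂ), μ (XM n M)ᶜ = 0 ∧
          ∀ f : CPoly n, hermStar n f = f →
            Integrable (fun a => (evalAt a f).re) μ ∧
            L f = ∫ a, (evalAt a f).re ∂μ) →
      ∀ f : CPoly n, hermStar n f = f →
        (∀ a ∈ XM n M, 0 < (evalAt a f).re) → f ∈ M) := by
  exact statement16_general n hM.toPointedCone hM.1 hM.2.1

end
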